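/- Anchored vanishing property of ANOVA terms: if t is a subset of Fin M, i ∈ t, and ξ : Fin M → ℝ satisfies ξ(i) = c(i), then u_t(ξ) = 0. In particular, for every nonempty subset t, the term u_t vanishes at the anchor point: u_t(c) = 0. -/

import Mathlib

/-!
The recursion says that the terms `u_s`, `s ⊆ t`, sum to `u (ξ^{c,t})` (`sum_powerset_anovaTerm`).
Let `i ∈ t` and `ξ i = c i`. By strong induction, `u_s ξ = 0` for every `s ⊊ t` containing `i`, so
that sum reduces to `u_t ξ` plus the sum over `s ⊆ t \ {i}`, giving
`u_t ξ = u (ξ^{c,t}) - u (ξ^{c,t \ {i}})`. The two arguments agree because `ξ i = c i`.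
-/

/-- Anchored evaluation `ξ^{c,t}`: agrees with `ξ` on `t` and with the anchor `c` off `t`. -/
def anchorEval {M : ℕ} (c ξ : Fin M → ℝ) (t : Finset (Fin M)) : Fin M → ℝ :=
  fun i => if i ∈ t then ξ i else c i

/-- Anchored ANOVA terms, defined by strong recursion on the subset `t`
(ordered by strict inclusion): `u_∅ ξ = u c`, and for `t ≠ ∅`,
`u_t ξ = u (ξ^{c,t}) - ∑_{s ⊊ t} u_s ξ`.  The single formula below covers
both cases, since for `t = ∅` we have `ξ^{c,∅} = c` and the sum over
`s ⊊ ∅` is empty. -/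
def anovaTerm {M : ℕ} (u : (Fin M → ℝ) → ℝ) (c : Fin M → ℝ) :
    Finset (Fin M) → (Fin M → ℝ) → ℝ
  | t, ξ =>
      u (anchorEval c ξ t)
        - ∑ s ∈ (t.powerset.erase t).attach,
            anovaTerm u c s.1 ξ
  termination_by t => t.card
  decreasing_by
    have hs := s.2
    rw [Finset.mem_erase, Finset.mem_powerset] at hs
    exact Finset.card_lt_card (lt_of_le_of_ne hs.2 hs.1)

theorem sum_powerset_anovaTerm {M : ℕ} (u : (Fin M → ℝ) → ℝ) (c ξ : Fin M → ℝ)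
    (t : Finset (Fin M)) :
    ∑ s ∈ t.powerset, anovaTerm u c s ξ = u (anchorEval c ξ t) := by
  have h : anovaTerm u c t ξ = u (anchorEval c ξ t)
      - ∑ s ∈ t.powerset.erase t, anovaTerm u c s ξ := by
    rw [anovaTerm, Finset.sum_attach (t.powerset.erase t) (fun s => anovaTerm u c s ξ)]
  rw [← Finset.add_sum_erase _ _ (Finset.mem_powerset_self t), h]
  ring

theorem anchorEval_erase {M : ℕ} {c ξ : Fin M → ℝ} {i : Fin M} (h : ξ i = c i)
    (t : Finset (Fin M)) : anchorEval c ξ (t.erase i) = anchorEval c ξ t := by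
  funext j
  by_cases hj : j = i
  · subst hj
    simp [anchorEval, h]
  · simp [anchorEval, hj]

theorem anovaTerm_eq_zero {M : ℕ} (u : (Fin M → ℝ) → ℝ) {c ξ : Fin M → ℝ} {i : Fin M}
    (h : ξ i = c i) (t : Finset (Fin M)) (hi : i ∈ t) : anovaTerm u c t ξ = 0 := by
  induction t using Finset.strongInduction with
  | H t ih =>
    have hsub : insert t (t.erase i).powerset ⊆ t.powerset :=
      Finset.insert_subset (Finset.mem_powerset_self t)
        (Finset.powerset_mono.2 (Finset.erase_subset i t))
    have hsum : ∑ s ∈ insert t (t.erase i).powerset, anovaTerm u c s ξ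
        = ∑ s ∈ t.powerset, anovaTerm u c s ξ := by
      refine Finset.sum_subset hsub fun s hs hns => ?_
      rw [Finset.mem_insert, not_or, Finset.mem_powerset, Finset.subset_erase] at hns
      rw [Finset.mem_powerset] at hs
      exact ih s (hs.ssubset_of_ne hns.1) (by tauto)
    have hnot : t ∉ (t.erase i).powerset := by
      simp [Finset.subset_erase, hi]
    rw [Finset.sum_insert hnot, sum_powerset_anovaTerm, sum_powerset_anovaTerm,
      anchorEval_erase h] at hsum
    linarith

/-- Anchored vanishing property of the ANOVA terms: if `i ∈ t` and `ξ i = c i`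
then `u_t(ξ) = 0`; in particular `u_t(c) = 0` for every nonempty `t`. -/
theorem anova_vanishing {M : ℕ} (hM : 1 ≤ M)
    (u : (Fin M → ℝ) → ℝ) (c : Fin M → ℝ) :
    (∀ (t : Finset (Fin M)) (i : Fin M) (ξ : Fin M → ℝ),
        i ∈ t → ξ i = c i → anovaTerm u c t ξ = 0) ∧
    (∀ t : Finset (Fin M), t.Nonempty → anovaTerm u c t c = 0) := by
  refine ⟨fun t i ξ hi h => anovaTerm_eq_zero u h t hi, ?_⟩
  rintro t ⟨i, hi⟩
  exact anovaTerm_eq_zero u rfl t hi
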